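/- arXiv:2007.08317 — 2 statements merged into one kernel-verified Lean document; each statement's English description precedes it below -/
import Mathlib

section
/- For every natural number k, if n = ∑_{i=0}^{k} 4^i (so the binary expansion of n is 1 0 1 0 … 0 1 with k+1 ones), then c(n) = 2k + 1, and consequently the palindromic length of the finite word (ν₂(1), ν₂(2), …, ν₂(n)) equals 2k + 1. In particular, the palindromic length sequence of the ruler sequence is unbounded and attains values as large as the number of binary digits of n. -/
/-!
The palindromic length of the prefix of length `n` of the ruler sequence `t ↦ ν₂ (t + 1)` is
`runs n` for every `n`.

View a factorization of the prefix as a path `0 = x₀ < x₁ < ⋯ < x_m = n` of cut points, and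
write `c` for the centre of the factor `(x, y]`. Two neighbouring terms of the sequence are
never equal, so palindromic factors have odd length. If `c = 2 ^ v * (2 * u + 1)`, the terms at
`c - 2 ^ v` and `c + 2 ^ v` differ (when both exist), because `u` and `u + 1` have different
parities; so the factor has radius less than `2 ^ v`. In terms of the cut points this says that
`y` arises from `x` by complementing the `v + 1` lowest binary digits (`palindrome_step`).
Such a complementation affects the comparison of adjacent digits at a single place, so it changes
`runs` by at most one (`runs_flip_le`). As `runs 0 = 0`, at least `runs n` palindromes are needed.

Conversely, if `n` has `L` binary digits, then complementing all of them gives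
`n' = 2 ^ L - 1 - n < n` with one run fewer, and the factor `(n', n]` is a palindrome since
`ν₂ s = ν₂ (2 ^ L - s)`. Induction on `n` gives a factorization into `runs n` palindromes.

For `n = ∑_{i ≤ k} 4 ^ i` the digits alternate, so that `runs n = 2 * k + 1`.
-/

/-- `runs n` is the number of runs (maximal blocks of equal consecutive digits) in the binary
expansion of `n`: the number of indices `i` at which the `i`-th and `(i+1)`-th binary digits
of `n` differ. -/
def runs (n : ℕ) : ℕ :=
  ((Finset.range (n + 1)).filter fun i => n.testBit i ≠ n.testBit (i + 1)).card

/-- The palindromic length of a finite word `w`: the least `k` such that `w` is the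
concatenation of `k` nonempty palindromes (the empty word has palindromic length `0`). -/
noncomputable def palLen (w : List ℕ) : ℕ :=
  sInf {k : ℕ | ∃ l : List (List ℕ), l.length = k ∧
    (∀ p ∈ l, p ≠ [] ∧ p.Palindrome) ∧ l.flatten = w}

/-! ### Runs and complementation of low binary digits -/

/-- The set of places where a digit of `n` differs from the next higher digit. -/
def changes (n : ℕ) : Finset ℕ :=
  (Finset.range (n + 1)).filter fun i => n.testBit i ≠ n.testBit (i + 1)

lemma runs_eq_card (n : ℕ) : runs n = (changes n).card := rfl

/-- The bound on `i` in the definition of `changes` is harmless: all digits from the `n`-th on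
vanish. -/
lemma mem_changes (n i : ℕ) : i ∈ changes n ↔ n.testBit i ≠ n.testBit (i + 1) := by
  unfold changes
  rw [Finset.mem_filter, Finset.mem_range, and_iff_right_iff_imp]
  intro h
  by_contra hi
  have h1 : n < 2 ^ i := lt_of_lt_of_le Nat.lt_two_pow_self
    (Nat.pow_le_pow_right (by norm_num) (by omega))
  have h2 : n < 2 ^ (i + 1) := lt_of_lt_of_le h1 (Nat.pow_le_pow_right (by norm_num) (by omega))
  rw [Nat.testBit_lt_two_pow h1, Nat.testBit_lt_two_pow h2] at h
  exact h rfl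

/-- Complementing the `v + 1` lowest digits can only alter `changes` at the place `v`. -/
lemma mem_changes_flip (v u r i : ℕ) (hr : r < 2 ^ (v + 1)) (hi : i ≠ v) :
    i ∈ changes (2 ^ (v + 1) * u + r) ↔
      i ∈ changes (2 ^ (v + 1) * u + (2 ^ (v + 1) - (r + 1))) := by
  have hr' : 2 ^ (v + 1) - (r + 1) < 2 ^ (v + 1) := by omega
  rw [mem_changes, mem_changes, Nat.testBit_two_pow_mul_add _ hr, Nat.testBit_two_pow_mul_add _ hr,
    Nat.testBit_two_pow_mul_add _ hr', Nat.testBit_two_pow_mul_add _ hr',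
    Nat.testBit_two_pow_sub_succ hr, Nat.testBit_two_pow_sub_succ hr]
  by_cases h : i < v
  · have h1 : i < v + 1 := by omega
    have h2 : i + 1 < v + 1 := by omega
    simp [h1, h]
  · have h1 : ¬ i < v + 1 := by omega
    have h2 : ¬ i + 1 < v + 1 := by omega
    simp [h1, h]

lemma runs_flip_le (v u r : ℕ) (hr : r < 2 ^ (v + 1)) :
    runs (2 ^ (v + 1) * u + (2 ^ (v + 1) - (r + 1))) ≤ runs (2 ^ (v + 1) * u + r) + 1 := by
  rw [runs_eq_card, runs_eq_card]
  refine le_trans (Finset.card_le_card (t := insert v (changes (2 ^ (v + 1) * u + r))) ?_)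
    (Finset.card_insert_le _ _)
  intro i hi
  rw [Finset.mem_insert]
  by_cases h : i = v
  · exact Or.inl h
  · exact Or.inr ((mem_changes_flip v u r i hr h).2 hi)

/-- Complementing all digits of a number with `v + 1` digits removes the leading run. -/
lemma runs_flip_top (v n : ℕ) (h1 : 2 ^ v ≤ n) (h2 : n < 2 ^ (v + 1)) :
    runs (2 ^ (v + 1) - (n + 1)) + 1 ≤ runs n := by
  have hp : 2 ^ (v + 1) = 2 * 2 ^ v := by ring
  have hn : v ∈ changes n := by
    have h3 : n.testBit v = true := Nat.testBit_of_two_pow_le_and_two_pow_add_one_gt h1 h2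
    rw [mem_changes, Nat.testBit_lt_two_pow h2, h3]
    simp
  have hn' : v ∉ changes (2 ^ (v + 1) - (n + 1)) := by
    have h3 : 2 ^ (v + 1) - (n + 1) < 2 ^ v := by omega
    have h4 : 2 ^ (v + 1) - (n + 1) < 2 ^ (v + 1) := by omega
    rw [mem_changes, Nat.testBit_lt_two_pow h3, Nat.testBit_lt_two_pow h4]
    simp
  rw [runs_eq_card, runs_eq_card, ← Finset.card_insert_of_notMem hn']
  apply Finset.card_le_card
  intro i hi
  rw [Finset.mem_insert] at hi
  by_cases h : i = v
  · exact h ▸ hn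
  · have := mem_changes_flip v 0 n i h2 h
    simp only [mul_zero, zero_add] at this
    exact this.2 (hi.resolve_left h)

lemma runs_zero : runs 0 = 0 := by
  simp [runs]

/-! ### Palindromic factors of the ruler sequence -/

lemma val_two_pow_mul_odd (v m : ℕ) (hm : m % 2 = 1) : padicValNat 2 (2 ^ v * m) = v := by
  have h0 : m ≠ 0 := by omega
  rw [padicValNat.mul (by positivity) h0, padicValNat.prime_pow,
    padicValNat.eq_zero_of_not_dvd (by omega), add_zero]

lemma exists_odd_part (c : ℕ) (hc : c ≠ 0) : ∃ v u, c = 2 ^ v * (2 * u + 1) := by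
  obtain ⟨v, m, hm, rfl⟩ := Nat.exists_eq_two_pow_mul_odd hc
  obtain ⟨u, rfl⟩ := hm
  exact ⟨v, u, rfl⟩

lemma val_odd (m : ℕ) (hm : m % 2 = 1) : padicValNat 2 m = 0 :=
  padicValNat.eq_zero_of_not_dvd (by omega)

lemma val_even (m : ℕ) (hm : m % 2 = 0) (h0 : m ≠ 0) : padicValNat 2 m ≠ 0 := by
  have := one_le_padicValNat_of_dvd (p := 2) h0 (by omega)
  omega

lemma val_succ_ne (m : ℕ) (h0 : m ≠ 0) : padicValNat 2 m ≠ padicValNat 2 (m + 1) := by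
  rcases Nat.mod_two_eq_zero_or_one m with h | h
  · rw [val_odd (m + 1) (by omega)]
    exact val_even m h h0
  · rw [val_odd m h]
    exact (val_even (m + 1) (by omega) (by omega)).symm

lemma val_two_pow_sub (L s : ℕ) (h0 : s ≠ 0) (hs : s < 2 ^ L) :
    padicValNat 2 (2 ^ L - s) = padicValNat 2 s := by
  obtain ⟨v, u, rfl⟩ := exists_odd_part s h0
  have hv : v < L := by
    by_contra h
    have : 2 ^ L ≤ 2 ^ v := Nat.pow_le_pow_right (by norm_num) (by omega)
    have := Nat.le_mul_of_pos_right (2 ^ v) (show 0 < 2 * u + 1 by omega)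
    omega
  obtain ⟨d, rfl⟩ := Nat.exists_eq_add_of_lt hv
  have he : 2 ^ (v + d + 1) = 2 ^ v * (2 * 2 ^ d) := by ring
  rw [he] at hs ⊢
  have hlt : 2 * u + 1 < 2 * 2 ^ d := Nat.lt_of_mul_lt_mul_left hs
  rw [← Nat.mul_sub, val_two_pow_mul_odd _ _ (by omega), val_two_pow_mul_odd _ _ (by omega)]

/-- If the factor of the ruler sequence at the places `x + 1, …, x + a` is a palindrome, then
`x + a` arises from `x` by complementing some number `v + 1` of lowest binary digits. -/
lemma palindrome_step (x a : ℕ) (ha : 0 < a)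
    (h : ∀ i < a, padicValNat 2 (x + i + 1) = padicValNat 2 (x + a - i)) :
    ∃ v u r, r < 2 ^ (v + 1) ∧ x = 2 ^ (v + 1) * u + r ∧
      x + a = 2 ^ (v + 1) * u + (2 ^ (v + 1) - (r + 1)) := by
  have hodd : a % 2 = 1 := by
    by_contra hcon
    obtain ⟨b, rfl⟩ : ∃ b, a = 2 * (b + 1) := ⟨a / 2 - 1, by omega⟩
    have := h b (by omega)
    rw [show x + 2 * (b + 1) - b = x + b + 1 + 1 by omega] at this
    exact val_succ_ne _ (by omega) this
  obtain ⟨d, rfl⟩ : ∃ d, a = 2 * d + 1 := ⟨a / 2, by omega⟩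
  obtain ⟨v, u, hc⟩ := exists_odd_part (x + d + 1) (by omega)
  have hpos : 0 < 2 ^ v := by positivity
  have hc' : x + d + 1 = 2 * (2 ^ v * u) + 2 ^ v := by rw [hc]; ring
  have hp : 2 ^ (v + 1) = 2 * 2 ^ v := by ring
  have hp' : 2 ^ (v + 1) * u = 2 * (2 ^ v * u) := by ring
  have hd : d < 2 ^ v := by
    by_contra hcon
    have hu : u ≠ 0 := by
      rintro rfl
      omega
    -- The terms at distance `2 ^ v` from the centre `x + d + 1` have to agree.
    have h1 := h (d - 2 ^ v) (by omega)
    rw [show x + (d - 2 ^ v) + 1 = 2 ^ (v + 1) * u by omega,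
      show x + (2 * d + 1) - (d - 2 ^ v) = 2 ^ (v + 1) * (u + 1) by
        rw [mul_add, hp', hp]; omega,
      padicValNat.mul (by positivity) hu, padicValNat.mul (by positivity) (by omega)] at h1
    exact val_succ_ne u hu (by omega)
  exact ⟨v, u, 2 ^ v - 1 - d, by omega, by omega, by omega⟩

/-! ### Palindromic factorizations -/

/-- The factor of the ruler sequence at the places `x + 1, …, x + m`. -/
def rulerFactor (x m : ℕ) : List ℕ :=
  (List.range' x m).map fun t => padicValNat 2 (t + 1)

lemma rulerFactor_append (x a b : ℕ) :
    rulerFactor x (a + b) = rulerFactor x a ++ rulerFactor (x + a) b := by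
  unfold rulerFactor
  rw [← List.map_append, List.range'_append_1]

lemma length_rulerFactor (x m : ℕ) : (rulerFactor x m).length = m := by
  simp [rulerFactor]

lemma rulerFactor_palindrome_iff (x a : ℕ) : (rulerFactor x a).Palindrome ↔
    ∀ i < a, padicValNat 2 (x + i + 1) = padicValNat 2 (x + a - i) := by
  rw [List.Palindrome.iff_reverse_eq]
  constructor
  · intro h i hi
    have h1 := congrArg (fun l => l[i]?) h
    simp only [rulerFactor] at h1
    rw [List.getElem?_eq_getElem (by simpa using hi),
      List.getElem?_eq_getElem (by simpa using hi)] at h1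
    simp only [List.getElem_reverse, List.getElem_map, List.getElem_range', List.length_map,
      List.length_range', Option.some.injEq, one_mul] at h1
    rw [← h1]
    congr 1
    omega
  · intro h
    apply List.ext_getElem
    · simp
    · intro i h1 h2
      rw [length_rulerFactor] at h2
      simp only [rulerFactor, List.getElem_reverse, List.getElem_map, List.getElem_range',
        List.length_map, List.length_range', one_mul]
      rw [h i h2]
      congr 1
      omega

/-- Each palindrome in a factorization raises `runs` of the cut point by at most one. -/
lemma runs_le_of_factorization (l : List (List ℕ)) : ∀ x m : ℕ,
    (∀ p ∈ l, p ≠ [] ∧ p.Palindrome) → l.flatten = rulerFactor x m →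
    runs (x + m) ≤ runs x + l.length := by
  induction l with
  | nil =>
    intro x m _ h
    have := congrArg List.length h
    rw [length_rulerFactor] at this
    simp at this
    simp [← this]
  | cons p l ih =>
    intro x m hp h
    rw [List.flatten_cons] at h
    have hlen := congrArg List.length h
    rw [length_rulerFactor, List.length_append] at hlen
    rw [← hlen, rulerFactor_append] at h
    obtain ⟨h1, h2⟩ := List.append_inj h (length_rulerFactor _ _).symm
    obtain ⟨hne, hpal⟩ := hp p (by simp)
    have h3 := ih _ _ (fun q hq => hp q (by simp [hq])) h2
    rw [h1, rulerFactor_palindrome_iff] at hpal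
    obtain ⟨v, u, r, hr, hx, hy⟩ := palindrome_step x p.length (List.length_pos_iff.2 hne) hpal
    have h4 := runs_flip_le v u r hr
    rw [← hx, ← hy] at h4
    rw [← hlen, ← add_assoc, List.length_cons]
    omega

lemma exists_factorization (n : ℕ) : ∃ l : List (List ℕ), l.length ≤ runs n ∧
    (∀ p ∈ l, p ≠ [] ∧ p.Palindrome) ∧ l.flatten = rulerFactor 0 n := by
  induction n using Nat.strong_induction_on with
  | _ n ih =>
    rcases Nat.eq_zero_or_pos n with rfl | hn
    · exact ⟨[], by simp, by simp, by simp [rulerFactor]⟩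
    have h1 : 2 ^ Nat.log 2 n ≤ n := Nat.pow_log_le_self 2 (by omega)
    have h2 : n < 2 ^ (Nat.log 2 n + 1) := Nat.lt_pow_succ_log_self (by norm_num) n
    have hr := runs_flip_top _ n h1 h2
    generalize Nat.log 2 n = v at h1 h2 hr
    have hp : 2 ^ (v + 1) = 2 * 2 ^ v := by ring
    obtain ⟨n', hn'⟩ : ∃ n', n' = 2 ^ (v + 1) - (n + 1) := ⟨_, rfl⟩
    rw [← hn'] at hr
    obtain ⟨l, hl, hpal, hflat⟩ := ih n' (by omega)
    refine ⟨l ++ [rulerFactor n' (n - n')], ?_, ?_, ?_⟩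
    · simp only [List.length_append, List.length_singleton]
      omega
    · intro p hp'
      rw [List.mem_append, List.mem_singleton] at hp'
      rcases hp' with hp' | rfl
      · exact hpal p hp'
      · constructor
        · apply List.ne_nil_of_length_pos
          rw [length_rulerFactor]
          omega
        · rw [rulerFactor_palindrome_iff]
          intro i hi
          rw [← val_two_pow_sub (v + 1) (n' + i + 1) (by omega) (by omega)]
          congr 1
          omega
    · rw [List.flatten_append, hflat]
      conv_rhs => rw [show n = n' + (n - n') by omega, rulerFactor_append]
      simp

lemma palLen_ruler (n : ℕ) :
    palLen ((List.range n).map fun t => padicValNat 2 (t + 1)) = runs n := by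
  have hw : ((List.range n).map fun t => padicValNat 2 (t + 1)) = rulerFactor 0 n := by
    rw [rulerFactor, List.range_eq_range']
  rw [hw]
  obtain ⟨l, hl, hpal, hflat⟩ := exists_factorization n
  have lower : ∀ l : List (List ℕ), (∀ p ∈ l, p ≠ [] ∧ p.Palindrome) →
      l.flatten = rulerFactor 0 n → runs n ≤ l.length := by
    intro l hpal hflat
    have := runs_le_of_factorization l 0 n hpal hflat
    rwa [runs_zero, zero_add, zero_add] at this
  apply le_antisymm
  · exact le_trans (Nat.sInf_le ⟨l, rfl, hpal, hflat⟩) hl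
  · refine le_csInf ?_ ?_
    · exact ⟨l.length, l, rfl, hpal, hflat⟩
    rintro k ⟨l, rfl, hpal, hflat⟩
    exact lower l hpal hflat

/-! ### Numbers with alternating binary digits -/

lemma testBit_alternating (k : ℕ) : ∀ i : ℕ,
    (∑ j ∈ Finset.range (k + 1), 4 ^ j).testBit i = decide (i % 2 = 0 ∧ i ≤ 2 * k) := by
  induction k with
  | zero =>
    intro i
    rcases i with _ | i
    · simp
    · simp [Nat.testBit_succ]
  | succ k ih =>
    intro i
    have hs : ∑ j ∈ Finset.range (k + 1 + 1), 4 ^ j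
        = 4 * (∑ j ∈ Finset.range (k + 1), 4 ^ j) + 1 := by
      rw [Finset.sum_range_succ', Finset.mul_sum]
      simp [pow_succ, mul_comm]
    rw [hs]
    generalize ∑ j ∈ Finset.range (k + 1), 4 ^ j = N at ih
    rcases i with _ | _ | i
    · rw [Nat.testBit_zero]
      simp
      omega
    · rw [Nat.testBit_succ, Nat.testBit_zero]
      simp
      omega
    · rw [Nat.testBit_succ, Nat.testBit_succ, show (4 * N + 1) / 2 / 2 = N by omega, ih]
      rw [decide_eq_decide]
      omega

lemma runs_alternating (k : ℕ) : runs (∑ i ∈ Finset.range (k + 1), 4 ^ i) = 2 * k + 1 := by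
  have : changes (∑ i ∈ Finset.range (k + 1), 4 ^ i) = Finset.range (2 * k + 1) := by
    ext i
    rw [mem_changes, testBit_alternating, testBit_alternating, Finset.mem_range, Ne,
      decide_eq_decide]
    omega
  rw [runs_eq_card, this, Finset.card_range]

/-- For `n = ∑_{i=0}^{k} 4 ^ i` (binary expansion `1 0 1 0 … 0 1` with `k + 1` ones) one has
`runs n = 2k + 1`, hence the palindromic length of the prefix `(ν₂(1), …, ν₂(n))` of
the ruler sequence is `2k + 1`; in particular the palindromic length sequence of the ruler
sequence is unbounded. -/
theorem ruler_palLen_unbounded (k : ℕ) :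
    (runs (∑ i ∈ Finset.range (k + 1), 4 ^ i) = 2 * k + 1 ∧
      palLen ((List.range (∑ i ∈ Finset.range (k + 1), 4 ^ i)).map
        fun t => padicValNat 2 (t + 1)) = 2 * k + 1) ∧
    ∀ M : ℕ, ∃ n : ℕ, 1 ≤ n ∧
      M ≤ palLen ((List.range n).map fun t => padicValNat 2 (t + 1)) := by
  refine ⟨⟨runs_alternating k, by rw [palLen_ruler, runs_alternating]⟩, fun M => ?_⟩
  refine ⟨∑ i ∈ Finset.range (M + 1), 4 ^ i, ?_, ?_⟩
  · rw [Finset.sum_range_succ']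
    simp
  · rw [palLen_ruler, runs_alternating]
    omega
end

section
/- Let b(n) = ν₂(n) mod 2 denote the period-doubling sequence, and for n ≥ 1 let P(n) denote the palindromic length of the finite word (b(1), b(2), …, b(n)). Then for every natural number k, taking n = ∑_{i=0}^{k} 4^i, one has 3·P(n) ≥ 2k + 1. In particular, the palindromic length sequence of the period-doubling sequence is unbounded: for every natural number M there exists n ≥ 1 with P(n) ≥ M. -/
/-- The number of pairs of distinct neighbouring digits in the binary expansion of `n`, where a
leading zero is included. The lowest two digits differ exactly when `n + n / 2` is odd. -/
def signChanges (n : ℕ) : ℕ :=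
  if n = 0 then 0 else signChanges (n / 2) + (n + n / 2) % 2
termination_by n
decreasing_by omega

theorem signChanges_zero : signChanges 0 = 0 := by
  rw [signChanges]; simp

theorem signChanges_rec (n : ℕ) :
    signChanges n = signChanges (n / 2) + (n + n / 2) % 2 := by
  rcases Nat.eq_zero_or_pos n with rfl | h
  · simp
  · rw [signChanges, if_neg (by omega)]

theorem signChanges_succ_le (n : ℕ) : signChanges (n + 1) ≤ signChanges n + 1 := by
  induction n using Nat.strong_induction_on with
  | _ n ih =>
    rw [signChanges_rec (n + 1), signChanges_rec n]
    obtain ⟨m, rfl | rfl⟩ := n.even_or_odd'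
    · rw [show (2 * m + 1) / 2 = m by omega, show 2 * m / 2 = m by omega]
      omega
    · have := ih m (by omega)
      rw [show (2 * m + 1 + 1) / 2 = m + 1 by omega, show (2 * m + 1) / 2 = m by omega]
      omega

theorem signChanges_add_le (n d : ℕ) : signChanges (n + d) ≤ signChanges n + d := by
  induction d with
  | zero => simp
  | succ d ih =>
    have := signChanges_succ_le (n + d)
    rw [← add_assoc]
    omega

/-- If `2 ^ a * z = p + q + 1` with `z` even, the digits of `p` and `q` in the positions `0, …, a`
are complementary, so that these digits contribute equally to `signChanges p` and
`signChanges q`. -/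
theorem signChanges_reflect (a z p q : ℕ) (hz : z % 2 = 0) (h : p + q + 1 = 2 ^ a * z) :
    signChanges q + signChanges (p / 2 ^ a) = signChanges p + signChanges (q / 2 ^ a) := by
  induction a generalizing p q with
  | zero => simp [add_comm]
  | succ a ih =>
    rw [pow_succ', mul_assoc] at h
    have hev : 2 ^ a * z % 2 = 0 := by rw [Nat.mul_mod, hz]; simp
    have := ih (p / 2) (q / 2) (by omega)
    rw [signChanges_rec p, signChanges_rec q, pow_succ', ← Nat.div_div_eq_div_mul,
      ← Nat.div_div_eq_div_mul]
    omega

/-- The period-doubling sequence. -/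
def pd (n : ℕ) : ℕ := padicValNat 2 n % 2

theorem pd_pow_mul (a m : ℕ) (hm : 0 < m) : pd (2 ^ a * m) = (a + padicValNat 2 m) % 2 := by
  rw [pd, padicValNat.mul (by positivity) (by omega), padicValNat.prime_pow]

theorem padicValNat_odd {m : ℕ} (hm : m % 2 = 1) : padicValNat 2 m = 0 :=
  padicValNat.eq_zero_of_not_dvd (by omega)

theorem padicValNat_two_mul {m : ℕ} (hm : 0 < m) :
    padicValNat 2 (2 * m) = padicValNat 2 m + 1 := by
  rw [padicValNat.mul (by omega) (by omega), padicValNat.self (by omega), add_comm]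

theorem pd_odd {m : ℕ} (hm : m % 2 = 1) : pd m = 0 := by
  rw [pd, padicValNat_odd hm]

theorem pd_two_mod_four {m : ℕ} (hm : m % 4 = 2) : pd m = 1 := by
  rw [pd, show m = 2 * (m / 2) by omega, padicValNat_two_mul (by omega),
    padicValNat_odd (by omega)]

/-- In an even palindrome of length at least `4`, the four central letters include the values of
`pd` at two consecutive even numbers, and both are equal to a value of `pd` at an odd number,
which is `0`. But one of the two even numbers is `2` modulo `4`. -/
theorem length_le_two_of_even_pal (p m : ℕ) (hm : m % 2 = 0)
    (h : ∀ i j, p < i → p < j → i + j = p + (p + m) + 1 → pd i = pd j) : m ≤ 2 := by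
  by_contra! hlt
  obtain ⟨t, rfl⟩ : ∃ t, m = 2 * t + 4 := ⟨(m - 4) / 2, by omega⟩
  have h1 := h (p + t + 1) (p + t + 4) (by omega) (by omega) (by omega)
  have h2 := h (p + t + 2) (p + t + 3) (by omega) (by omega) (by omega)
  rcases (by omega : (p + t) % 4 = 0 ∨ (p + t) % 4 = 1 ∨ (p + t) % 4 = 2 ∨ (p + t) % 4 = 3)
    with h4 | h4 | h4 | h4
  · rw [pd_two_mod_four (m := p + t + 2) (by omega), pd_odd (by omega)] at h2
    omega
  · rw [pd_two_mod_four (m := p + t + 1) (by omega), pd_odd (by omega)] at h1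
    omega
  · rw [pd_odd (m := p + t + 1) (by omega), pd_two_mod_four (by omega)] at h1
    omega
  · rw [pd_odd (m := p + t + 2) (by omega), pd_two_mod_four (by omega)] at h2
    omega

/-- An odd palindrome of radius `r` centred at `2 ^ a * c`, `c` odd, has `r < 3 * 2 ^ a`. Otherwise
comparing the letters at distance `2 ^ a` and `3 * 2 ^ a` from the centre shows that two consecutive
multiples of `4` both have odd `2`-adic valuation. -/
theorem radius_lt_of_odd_pal (a c r : ℕ) (hc : c % 2 = 1) (hr : r < 2 ^ a * c)
    (h : ∀ d ≤ r, pd (2 ^ a * c - d) = pd (2 ^ a * c + d)) : r < 3 * 2 ^ a := by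
  by_contra! hlt
  have hc3 : 3 < c := by
    by_contra! hle
    have := Nat.mul_le_mul_left (2 ^ a) hle
    omega
  have h1 := h (2 ^ a * 1) (by omega)
  have h3 := h (2 ^ a * 3) (by omega)
  rw [← Nat.mul_sub, ← Nat.mul_add, pd_pow_mul _ _ (by omega), pd_pow_mul _ _ (by omega)] at h1 h3
  -- `4 * m` and `4 * (m + 1)` are the multiples of `4` among `c - 3`, `c - 1`, `c + 1`, `c + 3`.
  have key : ∃ m, 0 < m ∧ padicValNat 2 m % 2 = 1 ∧ padicValNat 2 (m + 1) % 2 = 1 := by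
    obtain ⟨m, rfl | rfl⟩ : ∃ m, c = 4 * m + 1 ∨ c = 4 * m + 3 := ⟨c / 4, by omega⟩
    · refine ⟨m, by omega, ?_⟩
      rw [show 4 * m + 1 - 1 = 2 * (2 * m) by omega, show 4 * m + 1 + 1 = 2 * (2 * m + 1) by omega,
        padicValNat_two_mul (by omega), padicValNat_two_mul (by omega),
        padicValNat_two_mul (by omega), padicValNat_odd (m := 2 * m + 1) (by omega)] at h1
      rw [show 4 * m + 1 - 3 = 2 * (2 * m - 1) by omega,
        show 4 * m + 1 + 3 = 2 * (2 * (m + 1)) by omega,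
        padicValNat_two_mul (by omega), padicValNat_two_mul (by omega),
        padicValNat_two_mul (by omega), padicValNat_odd (m := 2 * m - 1) (by omega)] at h3
      omega
    · refine ⟨m, by omega, ?_⟩
      rw [show 4 * m + 3 - 1 = 2 * (2 * m + 1) by omega,
        show 4 * m + 3 + 1 = 2 * (2 * (m + 1)) by omega,
        padicValNat_two_mul (by omega), padicValNat_two_mul (by omega),
        padicValNat_two_mul (by omega), padicValNat_odd (m := 2 * m + 1) (by omega)] at h1
      rw [show 4 * m + 3 - 3 = 2 * (2 * m) by omega, show 4 * m + 3 + 3 = 2 * (2 * m + 3) by omega,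
        padicValNat_two_mul (by omega), padicValNat_two_mul (by omega),
        padicValNat_two_mul (by omega), padicValNat_odd (m := 2 * m + 3) (by omega)] at h3
      omega
  obtain ⟨m, -, h4, h5⟩ := key
  rcases Nat.mod_two_eq_zero_or_one m with h6 | h6
  · rw [padicValNat_odd (m := m + 1) (by omega)] at h5
    omega
  · rw [padicValNat_odd h6] at h4
    omega

/-- The effect of an odd palindrome on the number of sign changes, expressed arithmetically. -/
theorem signChanges_le_of_centre (a c p q : ℕ) (hc : c % 2 = 1) (hpq : p + q + 1 = 2 ^ a * (2 * c))
    (hlt : q < p + 6 * 2 ^ a) (hle : p ≤ q) : signChanges q ≤ signChanges p + 3 := by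
  have hrefl := signChanges_reflect a (2 * c) p q (by omega) hpq
  have ha : 0 < 2 ^ a := by positivity
  have hp := Nat.div_add_mod p (2 ^ a)
  have hq := Nat.div_add_mod q (2 ^ a)
  have hpm := Nat.mod_lt p ha
  have hqm := Nat.mod_lt q ha
  have hxy : p / 2 ^ a ≤ q / 2 ^ a := Nat.div_le_div_right hle
  generalize p / 2 ^ a = x at *
  generalize q / 2 ^ a = y at *
  generalize p % 2 ^ a = u at *
  generalize q % 2 ^ a = v at *
  generalize 2 ^ a = A at *
  subst hp hq
  have hsum : x + y + 1 = 2 * c := by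
    have h1 : x + y < 2 * c := by
      by_contra! hcon
      have := Nat.mul_le_mul_left A hcon
      rw [mul_add] at this
      omega
    have h2 : 2 * c < x + y + 2 := by
      by_contra! hcon
      have := Nat.mul_le_mul_left A hcon
      simp only [mul_add] at this
      omega
    omega
  have hdiff : y < x + 7 := by
    by_contra! hcon
    have := Nat.mul_le_mul_left A hcon
    rw [mul_add] at this
    omega
  obtain ⟨d, rfl⟩ := Nat.exists_eq_add_of_le hxy
  rcases (by omega : d ≤ 3 ∨ d = 5) with hd | rfl
  · have := signChanges_add_le x d
    omega
  · have h2 := signChanges_add_le (x / 2) 2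
    have hx := signChanges_rec x
    have hy := signChanges_rec (x + 5)
    rw [show (x + 5) / 2 = x / 2 + 2 by omega] at hy
    omega

/-- Appending a palindromic factor `b(p+1) … b(p+m)` adds at most three sign changes. -/
theorem signChanges_le_of_pal (p m : ℕ)
    (h : ∀ i j, p < i → p < j → i + j = p + (p + m) + 1 → pd i = pd j) :
    signChanges (p + m) ≤ signChanges p + 3 := by
  rcases Nat.mod_two_eq_zero_or_one m with hm | hm
  · have h1 := length_le_two_of_even_pal p m hm h
    have h2 := signChanges_add_le p m
    omega
  · obtain ⟨r, rfl⟩ : ∃ r, m = 2 * r + 1 := ⟨m / 2, by omega⟩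
    obtain ⟨a, c, hc, hpc⟩ := Nat.exists_eq_two_pow_mul_odd (n := p + r + 1) (by omega)
    have hr := radius_lt_of_odd_pal a c r (Nat.odd_iff.mp hc) (by omega)
      (fun d hd => h _ _ (by omega) (by omega) (by omega))
    refine signChanges_le_of_centre a c _ _ (Nat.odd_iff.mp hc) ?_ (by omega) (by omega)
    rw [mul_left_comm, ← hpc]
    ring

theorem pd_eq_of_palindrome (s m : ℕ)
    (h : ((List.range' s m).map fun t => pd (t + 1)).Palindrome) (i j : ℕ) (hi : s < i)
    (hj : s < j) (hij : i + j = s + (s + m) + 1) : pd i = pd j := by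
  have hrev := h.reverse_eq
  have := congrArg (fun l => l[i - s - 1]?) hrev
  rw [List.getElem?_reverse (by simp; omega), List.getElem?_eq_getElem (by simp; omega),
    List.getElem?_eq_getElem (by simp; omega)] at this
  simp only [List.getElem_map, List.getElem_range', List.length_map, List.length_range',
    Option.some.injEq] at this
  rw [show s + 1 * (m - 1 - (i - s - 1)) + 1 = j by omega,
    show s + 1 * (i - s - 1) + 1 = i by omega] at this
  exact this.symm

theorem signChanges_le_of_flatten (l : List (List ℕ)) (s n : ℕ) (hl : ∀ w ∈ l, w.Palindrome)
    (h : l.flatten = (List.range' s n).map fun t => pd (t + 1)) :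
    signChanges (s + n) ≤ signChanges s + 3 * l.length := by
  induction l generalizing s n with
  | nil =>
    have hn : n = 0 := by simpa using (congrArg List.length h).symm
    simp [hn]
  | cons w l ih =>
    rw [List.flatten_cons] at h
    have hlen := congrArg List.length h
    simp only [List.length_append, List.length_map, List.length_range'] at hlen
    obtain ⟨k, rfl⟩ : ∃ k, n = w.length + k := ⟨n - w.length, by omega⟩
    rw [← List.range'_append_1, List.map_append] at h
    obtain ⟨hw, hrest⟩ := List.append_inj h (by simp)
    have hpal := hl w (by simp)
    rw [hw] at hpal
    have h1 := signChanges_le_of_pal s w.length (pd_eq_of_palindrome s _ hpal)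
    have h2 := ih (s + w.length) k (fun v hv => hl v (by simp [hv])) hrest
    rw [List.length_cons, ← add_assoc]
    omega

theorem signChanges_le_palLen (n : ℕ) :
    signChanges n ≤ 3 * palLen ((List.range n).map fun t => padicValNat 2 (t + 1) % 2) := by
  set w := (List.range n).map fun t => padicValNat 2 (t + 1) % 2 with hw
  -- The infimum is attained: the factorization into single letters shows the set is nonempty.
  have hne : {k : ℕ | ∃ l : List (List ℕ), l.length = k ∧
      (∀ p ∈ l, p ≠ [] ∧ p.Palindrome) ∧ l.flatten = w}.Nonempty := by
    refine ⟨_, w.map fun x => [x], rfl, ?_, ?_⟩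
    · intro p hp
      obtain ⟨x, -, rfl⟩ := List.mem_map.mp hp
      exact ⟨by simp, List.Palindrome.singleton x⟩
    · rw [← List.flatMap_def, List.flatMap_singleton']
  obtain ⟨l, hlen, hpal, hflat⟩ := Nat.sInf_mem hne
  have := signChanges_le_of_flatten l 0 n (fun v hv => (hpal v hv).2)
    (by rw [hflat, hw, List.range_eq_range']; rfl)
  rw [signChanges_zero, hlen, zero_add, zero_add] at this
  exact this

theorem signChanges_sum (k : ℕ) :
    (∑ i ∈ Finset.range (k + 1), 4 ^ i) % 2 = 1 ∧
      signChanges (∑ i ∈ Finset.range (k + 1), 4 ^ i) = 2 * k + 1 := by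
  induction k with
  | zero =>
    refine ⟨by simp, ?_⟩
    rw [show ∑ i ∈ Finset.range (0 + 1), 4 ^ i = 1 by simp, signChanges_rec]
    simp [signChanges_zero]
  | succ k ih =>
    -- Passing from `k` to `k + 1` appends the digits `01`.
    rw [show ∑ i ∈ Finset.range (k + 1 + 1), 4 ^ i
      = 4 * (∑ i ∈ Finset.range (k + 1), 4 ^ i) + 1 by
        rw [Finset.sum_range_succ', Finset.mul_sum, pow_zero]
        simp only [pow_succ']]
    generalize ∑ i ∈ Finset.range (k + 1), 4 ^ i = S at *
    refine ⟨by omega, ?_⟩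
    rw [signChanges_rec, show (4 * S + 1) / 2 = 2 * S by omega, signChanges_rec,
      show 2 * S / 2 = S by omega]
    omega

/-- For the period-doubling sequence `b(m) = ν₂(m) mod 2`, the palindromic length `P n` of
the prefix `(b(1), …, b(n))` satisfies `3 * P n ≥ 2k + 1` when `n = ∑_{i=0}^{k} 4 ^ i`;
in particular the palindromic length sequence of the period-doubling sequence is unbounded. -/
theorem pd_palLen_unbounded :
    (∀ k : ℕ, 2 * k + 1 ≤ 3 * palLen ((List.range (∑ i ∈ Finset.range (k + 1), 4 ^ i)).map
      fun t => padicValNat 2 (t + 1) % 2)) ∧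
    ∀ M : ℕ, ∃ n : ℕ, 1 ≤ n ∧
      M ≤ palLen ((List.range n).map fun t => padicValNat 2 (t + 1) % 2) := by
  have main : ∀ k : ℕ, 2 * k + 1 ≤ 3 * palLen ((List.range
      (∑ i ∈ Finset.range (k + 1), 4 ^ i)).map fun t => padicValNat 2 (t + 1) % 2) := by
    intro k
    rw [← (signChanges_sum k).2]
    exact signChanges_le_palLen _
  refine ⟨main, fun M => ⟨∑ i ∈ Finset.range (2 * M + 1), 4 ^ i, ?_, ?_⟩⟩
  · have := (signChanges_sum (2 * M)).1
    omega
  · have := main (2 * M)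
    omega
end
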